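/- arXiv:2210.15711 — 5 statements merged into one kernel-verified Lean document; each statement's English description precedes it below -/
import Mathlib

section
/- Let A, Add, Del, Add', Del' be sets with Add ∩ A = ∅, Del ⊆ A, B = (A \ Del) ∪ Add, Add' ∩ B = ∅, and Del' ⊆ B, and let C = (B \ Del') ∪ Add'. Then the composite update computed by the formulas Add'' = (Add' ∪ Add) \ Del' and Del'' = (Del' ∪ Del) \ Add' applied to A yields C: (A \ ((Del' ∪ Del) \ Add')) ∪ ((Add' ∪ Add) \ Del') = C. -/
/-- On `add' ⊓ del'` both composite formulas cancel, so the composite update leaves `a` as it is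
there, while applying the two updates in turn puts in all of `add'`. -/
theorem composite_update_general {α : Type*} [GeneralizedBooleanAlgebra α]
    {a add del add' del' : α} (h : add' ⊓ del' ≤ a) :
    a \ ((del' ⊔ del) \ add') ⊔ (add' ⊔ add) \ del' = (a \ del ⊔ add) \ del' ⊔ add' := by
  have add'_eq : a ⊓ add' ⊔ add' \ del' = add' :=
    le_antisymm (sup_le inf_le_right sdiff_le) <|
      calc add' = add' ⊓ del' ⊔ add' \ del' := (sup_inf_sdiff add' del').symm
        _ ≤ a ⊓ add' ⊔ add' \ del' := sup_le_sup_right (le_inf h inf_le_left) _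
  calc a \ ((del' ⊔ del) \ add') ⊔ (add' ⊔ add) \ del'
      = ((a \ del) \ del' ⊔ a ⊓ add') ⊔ (add' \ del' ⊔ add \ del') := by
        rw [sdiff_sdiff_right', sup_comm del', ← sdiff_sdiff_left, sup_sdiff]
    _ = ((a \ del) \ del' ⊔ add \ del') ⊔ (a ⊓ add' ⊔ add' \ del') := by ac_rfl
    _ = (a \ del ⊔ add) \ del' ⊔ add' := by rw [add'_eq, sup_sdiff]

/-- The composite update computed by `Add'' = (Add' ∪ Add) \ Del'` and
`Del'' = (Del' ∪ Del) \ Add'` applied to `A` yields `C`. -/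
theorem composite_update {α : Type*} (A Add Del B Add' Del' C : Set α)
    (hAdd : Add ∩ A = ∅) (hDel : Del ⊆ A) (hB : B = (A \ Del) ∪ Add)
    (hAdd' : Add' ∩ B = ∅) (hDel' : Del' ⊆ B) (hC : C = (B \ Del') ∪ Add') :
    (A \ ((Del' ∪ Del) \ Add')) ∪ ((Add' ∪ Add) \ Del') = C := by
  have disjoint : Disjoint Add' Del' :=
    (Set.disjoint_iff_inter_eq_empty.mpr hAdd').mono_right hDel'
  exact hC ▸ hB ▸ composite_update_general (disjoint.le_bot.trans bot_le)
end

section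
/- Let f : S → V be a view, U a nonempty complete set of updates on V (closed under composition, and for every u ∈ U and v ∈ V there exists g ∈ U with g(u(v)) = v), and T a translator for f and U (T(u ∘ v) = T(u) ∘ T(v), and for all u ∈ U and s ∈ S, u(f(s)) = f(s) implies T(u)(s) = s). Define the relation s ≡ s' on S by: s ≡ s' iff there exists u ∈ U with s = T(u)(s'). Then ≡ is an equivalence relation (reflexive, symmetric, and transitive). -/
/-!
If `g` undoes `u` at `f s`, then `g ∘ u` fixes `f s`, so the translation condition together with
functoriality says that `T g` undoes `T u` at `s`. Hence completeness of `U` passes to the set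
`T '' U` of updates on `S`. For any nonempty complete set of updates, closure under composition
gives transitivity of reachability, local inverses give symmetry, and composing an update with a
local inverse gives reflexivity.
-/

section

variable {S V : Type*}

/-- A complete set of updates: one closed under composition in which every update can be undone
at each state. The undoing update may depend on the state, so the updates in `U` need not be
bijective. -/
structure IsCompleteUpdateSet (U : Set (V → V)) : Prop where
  comp_mem : ∀ u ∈ U, ∀ v ∈ U, u ∘ v ∈ U
  exists_local_inverse : ∀ u ∈ U, ∀ v : V, ∃ g ∈ U, g (u v) = v

/-- A translator for the view `f` and the updates `U`. It is encoded as a function `T` on all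
updates of `V`, of which only the values on `U` are constrained. -/
structure IsViewTranslator (f : S → V) (U : Set (V → V)) (T : (V → V) → (S → S)) : Prop where
  map_comp : ∀ u ∈ U, ∀ v ∈ U, T (u ∘ v) = T u ∘ T v
  apply_eq_self : ∀ u ∈ U, ∀ s : S, u (f s) = f s → T u s = s

theorem IsCompleteUpdateSet.equivalence_exists_eq_apply {U : Set (V → V)}
    (hU : IsCompleteUpdateSet U) (hne : U.Nonempty) :
    Equivalence (fun x y : V => ∃ u ∈ U, x = u y) where
  refl x := by
    obtain ⟨u, hu⟩ := hne
    obtain ⟨g, hg, hgu⟩ := hU.exists_local_inverse u hu x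
    exact ⟨g ∘ u, hU.comp_mem g hg u hu, hgu.symm⟩
  symm := by
    rintro _ y ⟨u, hu, rfl⟩
    obtain ⟨g, hg, hgu⟩ := hU.exists_local_inverse u hu y
    exact ⟨g, hg, hgu.symm⟩
  trans := by
    rintro _ _ z ⟨u, hu, rfl⟩ ⟨v, hv, rfl⟩
    exact ⟨u ∘ v, hU.comp_mem u hu v hv, rfl⟩

namespace IsViewTranslator

variable {f : S → V} {U : Set (V → V)} {T : (V → V) → (S → S)}

theorem apply_apply_eq_self (hT : IsViewTranslator f U T) {g u : V → V} (hg : g ∈ U)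
    (hu : u ∈ U) (hgu : g ∘ u ∈ U) {s : S} (h : g (u (f s)) = f s) : T g (T u s) = s :=
  calc
    T g (T u s) = T (g ∘ u) s := (congrFun (hT.map_comp g hg u hu) s).symm
    _ = s := hT.apply_eq_self (g ∘ u) hgu s h

theorem isCompleteUpdateSet_image (hT : IsViewTranslator f U T) (hU : IsCompleteUpdateSet U) :
    IsCompleteUpdateSet (T '' U) where
  comp_mem := by
    rintro _ ⟨u, hu, rfl⟩ _ ⟨v, hv, rfl⟩
    exact ⟨u ∘ v, hU.comp_mem u hu v hv, hT.map_comp u hu v hv⟩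
  exists_local_inverse := by
    rintro _ ⟨u, hu, rfl⟩ s
    obtain ⟨g, hg, hgu⟩ := hU.exists_local_inverse u hu (f s)
    exact ⟨T g, Set.mem_image_of_mem T hg,
      hT.apply_apply_eq_self hg hu (hU.comp_mem g hg u hu) hgu⟩

end IsViewTranslator

end

/-- The relation `s ≡ s'` iff `∃ u ∈ U, s = T u s'` induced by a translator for a
nonempty complete set of view updates is an equivalence relation. -/
theorem translator_equivalence {S V : Type*} (f : S → V) (U : Set (V → V))
    (hne : U.Nonempty)
    (hcomp : ∀ u ∈ U, ∀ v ∈ U, u ∘ v ∈ U)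
    (hinv : ∀ u ∈ U, ∀ v : V, ∃ g ∈ U, g (u v) = v)
    (T : (V → V) → (S → S))
    (hfunct : ∀ u ∈ U, ∀ v ∈ U, T (u ∘ v) = T u ∘ T v)
    (htrans : ∀ u ∈ U, ∀ s : S, u (f s) = f s → T u s = s) :
    Equivalence (fun s s' : S => ∃ u ∈ U, s = T u s') := by
  have hU : IsCompleteUpdateSet U := ⟨hcomp, hinv⟩
  have hT : IsViewTranslator f U T := ⟨hfunct, htrans⟩
  have hTU : IsCompleteUpdateSet (T '' U) := hT.isCompleteUpdateSet_image hU
  simpa only [Set.exists_mem_image] using hTU.equivalence_exists_eq_apply (hne.image T)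
end

section
/- Let α be a predicate on tuples, and let s, s' be sets of tuples. Then {x ∈ s | ¬α x} = {x ∈ s' | ¬α x} if and only if there exist sets A and D of tuples, all of whose elements satisfy α, such that s' = (s \ D) ∪ A. (The equivalence classes of base states under translated selection-view updates are in one-to-one correspondence with the states of the selection complement.) -/
theorem sup_sdiff_sdiff_eq_of_le {β : Type*} [GeneralizedCoheytingAlgebra β] {a d p : β}
    (ha : a ≤ p) (hd : d ≤ p) (s : β) : (s \ d ⊔ a) \ p = s \ p := by
  rw [sup_sdiff, sdiff_sdiff, sup_eq_right.mpr hd, sdiff_eq_bot_iff.mpr ha, sup_bot_eq]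

theorem sdiff_inf_sup_inf_eq_of_sdiff_eq {β : Type*} [GeneralizedBooleanAlgebra β] {p s t : β}
    (h : s \ p = t \ p) : s \ (s ⊓ p) ⊔ t ⊓ p = t := by
  rw [sdiff_inf_self_left, h, sup_sdiff_inf]

/-- For base states as sets of tuples, `p` is the set of all tuples satisfying the predicate, so
`s \ p` is the complement view of `s` and `s ⊓ p` its selection view. -/
theorem selection_equivalence_classes_general {β : Type*} [GeneralizedBooleanAlgebra β]
    (p s t : β) : s \ p = t \ p ↔ ∃ a d : β, a ≤ p ∧ d ≤ p ∧ t = s \ d ⊔ a := by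
  constructor
  · intro h
    exact ⟨t ⊓ p, s ⊓ p, inf_le_right, inf_le_right, (sdiff_inf_sup_inf_eq_of_sdiff_eq h).symm⟩
  · rintro ⟨a, d, ha, hd, rfl⟩
    exact (sup_sdiff_sdiff_eq_of_le ha hd s).symm

/-- Two base states have the same selection complement iff one is obtained from
the other by a translated selection-view update. -/
theorem selection_equivalence_classes {α : Type*} (p : α → Prop) (s s' : Set α) :
    {x ∈ s | ¬ p x} = {x ∈ s' | ¬ p x} ↔
      ∃ A D : Set α, (∀ x ∈ A, p x) ∧ (∀ x ∈ D, p x) ∧ s' = (s \ D) ∪ A :=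
  selection_equivalence_classes_general {x | p x} s s'
end

section
/- Let K, A, B be types where A and B each have a distinguished null value. Let t and t' be sets of triples in K × A × B such that: (i) each is functional in the key, i.e. if (k, a, b) and (k, a', b') belong to the set then a = a' and b = b'; and (ii) no row has both attributes null, i.e. (k, a, b) in the set implies a ≠ null or b ≠ null. Define the view v(t) = {(k, a) | ∃b, (k, a, b) ∈ t and a ≠ null} and the complement c(t) = {(k, b) | ∃a, (k, a, b) ∈ t and b ≠ null}. If v(t) = v(t') and c(t) = c(t'), then t = t'. (The null-excluding projection onto K, B is a complement of the null-excluding projection onto K, A.) -/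
/-!
A key-functional table without all-null rows can be rebuilt from its two null-excluding
projections: it is their full outer join. Indeed, a row survives in at least one projection, and a
key absent from one projection but present in the other can only have the null value there.
-/

section OuterJoin

variable {K A B : Type*} {nullA : A} {nullB : B} {t : Set (K × A × B)} {k : K} {a : A} {b : B}

/-- The functional dependency of both attributes on the key: at most one row per key. -/
def KeyFunctional (t : Set (K × A × B)) : Prop :=
  ∀ k a b a' b', (k, a, b) ∈ t → (k, a', b') ∈ t → a = a' ∧ b = b'

/-- The null-excluding projection onto the key and the first attribute. -/
def nonNullProjFst (nullA : A) (t : Set (K × A × B)) : Set (K × A) :=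
  {q | ∃ b, (q.1, q.2, b) ∈ t ∧ q.2 ≠ nullA}

/-- The null-excluding projection onto the key and the second attribute. -/
def nonNullProjSnd (nullB : B) (t : Set (K × A × B)) : Set (K × B) :=
  {q | ∃ a, (q.1, a, q.2) ∈ t ∧ q.2 ≠ nullB}

/-- The relation `r` extended by the value `null` at every key on which `r` has no row. -/
def padNull (null : A) (r : Set (K × A)) : Set (K × A) :=
  {q | q ∈ r ∨ q.2 = null ∧ ∀ a, (q.1, a) ∉ r}

/-- The full outer join on the key: a key occurring in only one of `r` and `s` is joined with the
null value of the other. The first conjunct leaves out the keys occurring in neither. -/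
def fullOuterJoin (nullA : A) (nullB : B) (r : Set (K × A)) (s : Set (K × B)) :
    Set (K × A × B) :=
  {p | ((p.1, p.2.1) ∈ r ∨ (p.1, p.2.2) ∈ s) ∧
    (p.1, p.2.1) ∈ padNull nullA r ∧ (p.1, p.2.2) ∈ padNull nullB s}

theorem mem_padNull_iff_eq {r : Set (K × A)} (hr : ∀ x, (k, x) ∈ r ↔ x = a ∧ x ≠ nullA) {x : A} :
    (k, x) ∈ padNull nullA r ↔ x = a := by
  by_cases ha : a = nullA
  · have hempty : ∀ y, (k, y) ∉ r := fun y hy =>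
      ((hr y).mp hy).2 (((hr y).mp hy).1.trans ha)
    simp [padNull, hempty, ha]
  · have hmem : (k, a) ∈ r := (hr a).mpr ⟨rfl, ha⟩
    constructor
    · rintro (hx | ⟨-, hempty⟩)
      · exact ((hr x).mp hx).1
      · exact absurd hmem (hempty a)
    · rintro rfl
      exact Or.inl hmem

theorem KeyFunctional.mem_nonNullProjFst_iff (ht : KeyFunctional t) (h : (k, a, b) ∈ t) {x : A} :
    (k, x) ∈ nonNullProjFst nullA t ↔ x = a ∧ x ≠ nullA := by
  constructor
  · rintro ⟨y, hxy, hx⟩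
    exact ⟨(ht k x y a b hxy h).1, hx⟩
  · rintro ⟨rfl, hx⟩
    exact ⟨b, h, hx⟩

theorem KeyFunctional.mem_nonNullProjSnd_iff (ht : KeyFunctional t) (h : (k, a, b) ∈ t) {y : B} :
    (k, y) ∈ nonNullProjSnd nullB t ↔ y = b ∧ y ≠ nullB := by
  constructor
  · rintro ⟨x, hxy, hy⟩
    exact ⟨(ht k x y a b hxy h).2, hy⟩
  · rintro ⟨rfl, hy⟩
    exact ⟨a, h, hy⟩

theorem KeyFunctional.mem_padNull_nonNullProjFst_iff (ht : KeyFunctional t)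
    (h : (k, a, b) ∈ t) {x : A} :
    (k, x) ∈ padNull nullA (nonNullProjFst nullA t) ↔ x = a :=
  mem_padNull_iff_eq fun _ => ht.mem_nonNullProjFst_iff h

theorem KeyFunctional.mem_padNull_nonNullProjSnd_iff (ht : KeyFunctional t)
    (h : (k, a, b) ∈ t) {y : B} :
    (k, y) ∈ padNull nullB (nonNullProjSnd nullB t) ↔ y = b :=
  mem_padNull_iff_eq fun _ => ht.mem_nonNullProjSnd_iff h

theorem KeyFunctional.fullOuterJoin_nonNullProj_subset (ht : KeyFunctional t) :
    fullOuterJoin nullA nullB (nonNullProjFst nullA t) (nonNullProjSnd nullB t) ⊆ t := by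
  rintro ⟨k, a, b⟩ ⟨hkey, ha, hb⟩
  obtain ⟨a', b', hrow⟩ : ∃ a' b', (k, a', b') ∈ t := by
    rcases hkey with ⟨b', hrow, -⟩ | ⟨a', hrow, -⟩
    exacts [⟨a, b', hrow⟩, ⟨a', b, hrow⟩]
  obtain rfl : a = a' := (ht.mem_padNull_nonNullProjFst_iff hrow).mp ha
  obtain rfl : b = b' := (ht.mem_padNull_nonNullProjSnd_iff hrow).mp hb
  exact hrow

theorem KeyFunctional.subset_fullOuterJoin_nonNullProj (ht : KeyFunctional t)
    (hnn : ∀ k a b, (k, a, b) ∈ t → a ≠ nullA ∨ b ≠ nullB) :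
    t ⊆ fullOuterJoin nullA nullB (nonNullProjFst nullA t) (nonNullProjSnd nullB t) := by
  rintro ⟨k, a, b⟩ hrow
  have hkey : (k, a) ∈ nonNullProjFst nullA t ∨ (k, b) ∈ nonNullProjSnd nullB t :=
    (hnn k a b hrow).imp (fun ha => ⟨b, hrow, ha⟩) (fun hb => ⟨a, hrow, hb⟩)
  exact ⟨hkey, (ht.mem_padNull_nonNullProjFst_iff hrow).mpr rfl,
    (ht.mem_padNull_nonNullProjSnd_iff hrow).mpr rfl⟩

theorem KeyFunctional.fullOuterJoin_nonNullProj (ht : KeyFunctional t)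
    (hnn : ∀ k a b, (k, a, b) ∈ t → a ≠ nullA ∨ b ≠ nullB) :
    fullOuterJoin nullA nullB (nonNullProjFst nullA t) (nonNullProjSnd nullB t) = t :=
  ht.fullOuterJoin_nonNullProj_subset.antisymm (ht.subset_fullOuterJoin_nonNullProj hnn)

end OuterJoin

/-- The null-excluding projection onto columns K, B is a complement of the
null-excluding projection onto columns K, A. -/
theorem projection_complement {K A B : Type*} (nullA : A) (nullB : B)
    (t t' : Set (K × A × B))
    (hfun : ∀ k a b a' b', (k, a, b) ∈ t → (k, a', b') ∈ t → a = a' ∧ b = b')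
    (hfun' : ∀ k a b a' b', (k, a, b) ∈ t' → (k, a', b') ∈ t' → a = a' ∧ b = b')
    (hnn : ∀ k a b, (k, a, b) ∈ t → a ≠ nullA ∨ b ≠ nullB)
    (hnn' : ∀ k a b, (k, a, b) ∈ t' → a ≠ nullA ∨ b ≠ nullB)
    (hv : {q : K × A | ∃ b, (q.1, q.2, b) ∈ t ∧ q.2 ≠ nullA} =
          {q : K × A | ∃ b, (q.1, q.2, b) ∈ t' ∧ q.2 ≠ nullA})
    (hc : {q : K × B | ∃ a, (q.1, a, q.2) ∈ t ∧ q.2 ≠ nullB} =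
          {q : K × B | ∃ a, (q.1, a, q.2) ∈ t' ∧ q.2 ≠ nullB}) :
    t = t' := by
  calc
    t = fullOuterJoin nullA nullB (nonNullProjFst nullA t) (nonNullProjSnd nullB t) :=
      (KeyFunctional.fullOuterJoin_nonNullProj hfun hnn).symm
    _ = fullOuterJoin nullA nullB (nonNullProjFst nullA t') (nonNullProjSnd nullB t') :=
      congrArg₂ (fullOuterJoin nullA nullB) hv hc
    _ = t' := KeyFunctional.fullOuterJoin_nonNullProj hfun' hnn'
end

section
/- Let P ⊆ K × A and C ⊆ K × B with the integrity constraint that for every (k, b) ∈ C there exists a with (k, a) ∈ P, and define J = {(k, a, b) | (k, a) ∈ P, (k, b) ∈ C} and Comp = {(k, a) ∈ P | ¬∃b, (k, b) ∈ C}. Then: (1) the projection of J onto the parent columns is disjoint from Comp, i.e. {(k, a) | ∃b, (k, a, b) ∈ J} ∩ Comp = ∅ (the decomposition is perfect); and (2) the map (P, C) ↦ (J, Comp) is injective on pairs satisfying the integrity constraint, i.e. Comp is a complement of the hierarchical join view. -/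
/-!
A parent row is visible in the join exactly when it has a child, so the projection of the join to
the parent columns and the childless rows partition `P`. Referential integrity makes every child row
visible in the join, so projecting to the child columns recovers `C`.
-/

namespace HierarchicalJoin

variable {K A B : Type*}

/-- The join view of a parent table `P` and a child table `C` on their shared key column. -/
def join (P : Set (K × A)) (C : Set (K × B)) : Set (K × A × B) :=
  {r | (r.1, r.2.1) ∈ P ∧ (r.1, r.2.2) ∈ C}

/-- The complement of the join view: the parent rows without a child row. -/
def childless (P : Set (K × A)) (C : Set (K × B)) : Set (K × A) :=
  {q ∈ P | ¬ ∃ b, (q.1, b) ∈ C}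

/-- The integrity constraint under which the join view loses no child row: the key of every child
row occurs in the parent table. -/
def ReferentialIntegrity (P : Set (K × A)) (C : Set (K × B)) : Prop :=
  ∀ k b, (k, b) ∈ C → ∃ a, (k, a) ∈ P

/-- The projection of a joined table to the parent columns `K × A`, used to compare the join view
with the parent table. -/
def parentColumns (J : Set (K × A × B)) : Set (K × A) :=
  {q | ∃ b, (q.1, q.2, b) ∈ J}

/-- The projection of a joined table to the child columns `K × B`, used to recover the child table
from the join view. -/
def childColumns (J : Set (K × A × B)) : Set (K × B) :=
  {s | ∃ a, (s.1, a, s.2) ∈ J}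

theorem parentColumns_join (P : Set (K × A)) (C : Set (K × B)) :
    parentColumns (join P C) = {q ∈ P | ∃ b, (q.1, b) ∈ C} := by
  ext q
  simp only [parentColumns, join, Set.mem_ofPred_eq, exists_and_left]

theorem disjoint_parentColumns_join_childless (P : Set (K × A)) (C : Set (K × B)) :
    Disjoint (parentColumns (join P C)) (childless P C) := by
  rw [parentColumns_join, Set.disjoint_left]
  exact fun _ hchild hchildless => hchildless.2 hchild.2

theorem parentColumns_join_union_childless (P : Set (K × A)) (C : Set (K × B)) :
    parentColumns (join P C) ∪ childless P C = P := by
  rw [parentColumns_join]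
  exact Set.inter_union_compl P {q | ∃ b, (q.1, b) ∈ C}

theorem ReferentialIntegrity.childColumns_join {P : Set (K × A)} {C : Set (K × B)}
    (h : ReferentialIntegrity P C) : childColumns (join P C) = C := by
  ext ⟨k, b⟩
  simp only [childColumns, join, Set.mem_ofPred_eq, exists_and_right]
  exact and_iff_right_of_imp (h k b)

theorem parent_eq_of_join_eq_of_childless_eq {P P' : Set (K × A)} {C C' : Set (K × B)}
    (hJoin : join P C = join P' C') (hChildless : childless P C = childless P' C') : P = P' := by
  rw [← parentColumns_join_union_childless P C, hJoin, hChildless,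
    parentColumns_join_union_childless]

theorem ReferentialIntegrity.child_eq_of_join_eq {P P' : Set (K × A)} {C C' : Set (K × B)}
    (h : ReferentialIntegrity P C) (h' : ReferentialIntegrity P' C')
    (hJoin : join P C = join P' C') : C = C' := by
  rw [← h.childColumns_join, hJoin, h'.childColumns_join]

end HierarchicalJoin

open HierarchicalJoin in
theorem hierarchical_join_complement_general {K A B : Type*} :
    (∀ (P : Set (K × A)) (C : Set (K × B)),
      parentColumns (join P C) ∩ childless P C = ∅) ∧
    (∀ (P P' : Set (K × A)) (C C' : Set (K × B)),
      join P C = join P' C' → childless P C = childless P' C' →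
      P = P' ∧ (ReferentialIntegrity P C → ReferentialIntegrity P' C' → C = C')) :=
  ⟨fun P C => (disjoint_parentColumns_join_childless P C).inter_eq,
    fun _ _ _ _ hJoin hChildless =>
      ⟨parent_eq_of_join_eq_of_childless_eq hJoin hChildless,
        fun h h' => h.child_eq_of_join_eq h' hJoin⟩⟩

/-- The hierarchical join decomposition is perfect, and the childless parent rows
form a complement of the hierarchical join view. -/
theorem hierarchical_join_complement {K A B : Type*} :
    (∀ (P : Set (K × A)) (C : Set (K × B)),
      (∀ k b, (k, b) ∈ C → ∃ a, (k, a) ∈ P) →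
      {q : K × A | ∃ b, (q.1, q.2, b) ∈
          {r : K × A × B | (r.1, r.2.1) ∈ P ∧ (r.1, r.2.2) ∈ C}} ∩
        {q ∈ P | ¬ ∃ b, (q.1, b) ∈ C} = ∅) ∧
    (∀ (P P' : Set (K × A)) (C C' : Set (K × B)),
      (∀ k b, (k, b) ∈ C → ∃ a, (k, a) ∈ P) →
      (∀ k b, (k, b) ∈ C' → ∃ a, (k, a) ∈ P') →
      {r : K × A × B | (r.1, r.2.1) ∈ P ∧ (r.1, r.2.2) ∈ C} =
        {r : K × A × B | (r.1, r.2.1) ∈ P' ∧ (r.1, r.2.2) ∈ C'} →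
      {q ∈ P | ¬ ∃ b, (q.1, b) ∈ C} = {q ∈ P' | ¬ ∃ b, (q.1, b) ∈ C'} →
      P = P' ∧ C = C') :=
  ⟨fun P C _ => hierarchical_join_complement_general.1 P C, fun P P' C C' h h' hJoin hChildless =>
    (hierarchical_join_complement_general.2 P P' C C' hJoin hChildless).imp_right fun hC => hC h h'⟩
end
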